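/- Let D < −4 be an integer with D ≡ 0 or 1 (mod 4), and let r > 1 be an odd integer with prime factorization r = ∏_{i=1}^{k} p_i^{e_i}. Define φ_D(r) = ∏_{i=1}^{k} p_i^{e_i − 1} · (p_i − (D/p_i)). Then h(D·r²) = h(D) · φ_D(r). -/

import Mathlib

/-- A binary quadratic form `(a, b, c)` evaluated at `(x, y)`. -/
def qfEval (f : ℤ × ℤ × ℤ) (x y : ℤ) : ℤ :=
  f.1 * x ^ 2 + f.2.1 * x * y + f.2.2 * y ^ 2

/-- The discriminant `b² - 4ac` of the form `(a, b, c)`. -/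
def qfDisc (f : ℤ × ℤ × ℤ) : ℤ := f.2.1 ^ 2 - 4 * f.1 * f.2.2

/-- The form `(a, b, c)` is primitive if `gcd(a, b, c) = 1`. -/
def IsPrimitiveQF (f : ℤ × ℤ × ℤ) : Prop :=
  Int.gcd (Int.gcd f.1 f.2.1) f.2.2 = 1

/-- `f` is derived from `g` via the matrix `A`, i.e. `f(x,y) = g(A·(x,y)ᵀ)`. -/
def DerivedVia (f g : ℤ × ℤ × ℤ) (A : Matrix (Fin 2) (Fin 2) ℤ) : Prop :=
  ∀ x y : ℤ, qfEval f x y = qfEval g (A 0 0 * x + A 0 1 * y) (A 1 0 * x + A 1 1 * y)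

/-- Two forms are equivalent if one is derived from the other via a determinant-1
integer matrix. -/
def QFEquiv (f g : ℤ × ℤ × ℤ) : Prop :=
  ∃ A : Matrix (Fin 2) (Fin 2) ℤ, A.det = 1 ∧ DerivedVia f g A

/-- The class number `h(D)`: the number of equivalence classes of primitive binary
quadratic forms of discriminant `D` with positive leading coefficient. -/
noncomputable def classNumber (D : ℤ) : ℕ :=
  Nat.card (Quot fun f g : {f : ℤ × ℤ × ℤ // qfDisc f = D ∧ IsPrimitiveQF f ∧ 0 < f.1} =>
    QFEquiv f.1 g.1)

/-- `φ_D(r) = ∏ p^(e_p - 1) · (p - (D/p))` over the prime factorization `r = ∏ p^e_p`.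
For a prime `p`, the Jacobi symbol `J(D | p)` is the Legendre symbol `(D/p)`. -/
def phiD (D : ℤ) (r : ℕ) : ℤ :=
  ∏ p ∈ r.primeFactors, (p : ℤ) ^ (r.factorization p - 1) * ((p : ℤ) - jacobiSym D p)

/-!
For an odd prime `p`, every primitive form of discriminant `D p²` is equivalent to one of the shape
`f(x, p y)`, where `f` is primitive of discriminant `D` and `p ∤ f(1, 0)`; two such forms are
equivalent exactly when the underlying forms are equivalent under `Γ₀(p)`. So `h(D p²)` counts
`Γ₀(p)`-classes, and those lying over one `SL₂(ℤ)`-class correspond to the left cosets of `Γ₀(p)`,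
that is to the points of `ℙ¹(𝔽_p)`, at which a representative does not vanish: for `D < -4` the only
automorphs are `±1`, which act trivially on `ℙ¹(𝔽_p)`. A binary quadratic form over `𝔽_p` has
`1 + (D/p)` zeros on `ℙ¹(𝔽_p)`, so each fibre has `p - (D/p)` elements. Removing the prime factors
of `r` one at a time gives the formula.
-/

open CongruenceSubgroup
open scoped MatrixGroups

/-- The form `(x, y) ↦ f (M (x, y)ᵀ)`; substitution is a right action of matrices on forms. -/
def qfComp (f : ℤ × ℤ × ℤ) (M : Matrix (Fin 2) (Fin 2) ℤ) : ℤ × ℤ × ℤ :=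
  (qfEval f (M 0 0) (M 1 0),
   2 * f.1 * M 0 0 * M 0 1 + f.2.1 * (M 0 0 * M 1 1 + M 0 1 * M 1 0) + 2 * f.2.2 * M 1 0 * M 1 1,
   qfEval f (M 0 1) (M 1 1))

lemma derivedVia_iff_eq_qfComp {f g : ℤ × ℤ × ℤ} {M : Matrix (Fin 2) (Fin 2) ℤ} :
    DerivedVia f g M ↔ f = qfComp g M := by
  constructor
  · intro h
    have h₁ := h 1 0
    have h₂ := h 0 1
    have h₃ := h 1 1
    simp only [qfEval] at h₁ h₂ h₃
    refine Prod.ext ?_ (Prod.ext ?_ ?_) <;> simp only [qfComp, qfEval] <;> linarith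
  · rintro rfl x y
    simp only [qfComp, qfEval]
    ring

lemma qfComp_one (f : ℤ × ℤ × ℤ) : qfComp f 1 = f := by
  simp [qfComp, qfEval]

lemma qfComp_mul (f : ℤ × ℤ × ℤ) (M N : Matrix (Fin 2) (Fin 2) ℤ) :
    qfComp f (M * N) = qfComp (qfComp f M) N := by
  simp only [qfComp, qfEval, Matrix.mul_apply, Fin.sum_univ_two, Prod.mk.injEq]
  refine ⟨?_, ?_, ?_⟩ <;> ring

lemma qfComp_qfComp_inv (f : ℤ × ℤ × ℤ) (γ : SL(2, ℤ)) : qfComp (qfComp f γ) ↑γ⁻¹ = f := by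
  rw [← qfComp_mul, ← Matrix.SpecialLinearGroup.coe_mul, mul_inv_cancel,
    Matrix.SpecialLinearGroup.coe_one, qfComp_one]

lemma qfEquiv_iff_exists_eq_qfComp {f g : ℤ × ℤ × ℤ} :
    QFEquiv f g ↔ ∃ γ : SL(2, ℤ), f = qfComp g γ := by
  constructor
  · rintro ⟨A, hA, h⟩
    exact ⟨⟨A, hA⟩, derivedVia_iff_eq_qfComp.1 h⟩
  · rintro ⟨γ, h⟩
    exact ⟨γ, γ.2, derivedVia_iff_eq_qfComp.2 h⟩

lemma qfEquiv_qfComp (f : ℤ × ℤ × ℤ) (γ : SL(2, ℤ)) : QFEquiv (qfComp f γ) f :=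
  qfEquiv_iff_exists_eq_qfComp.2 ⟨γ, rfl⟩

lemma QFEquiv.symm {f g : ℤ × ℤ × ℤ} (h : QFEquiv f g) : QFEquiv g f := by
  obtain ⟨γ, rfl⟩ := qfEquiv_iff_exists_eq_qfComp.1 h
  exact qfEquiv_iff_exists_eq_qfComp.2 ⟨γ⁻¹, (qfComp_qfComp_inv g γ).symm⟩

lemma QFEquiv.trans {f g k : ℤ × ℤ × ℤ} (hfg : QFEquiv f g) (hgk : QFEquiv g k) :
    QFEquiv f k := by
  obtain ⟨γ, rfl⟩ := qfEquiv_iff_exists_eq_qfComp.1 hfg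
  obtain ⟨δ, rfl⟩ := qfEquiv_iff_exists_eq_qfComp.1 hgk
  exact qfEquiv_iff_exists_eq_qfComp.2 ⟨δ * γ, (qfComp_mul k δ γ).symm⟩

lemma qfEquiv_equivalence : Equivalence QFEquiv where
  refl f := qfEquiv_iff_exists_eq_qfComp.2 ⟨1, (qfComp_one f).symm⟩
  symm := QFEquiv.symm
  trans := QFEquiv.trans

lemma qfDisc_qfComp (f : ℤ × ℤ × ℤ) (M : Matrix (Fin 2) (Fin 2) ℤ) :
    qfDisc (qfComp f M) = M.det ^ 2 * qfDisc f := by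
  simp only [qfDisc, qfComp, qfEval, Matrix.det_fin_two]
  ring

lemma QFEquiv.qfDisc_eq {f g : ℤ × ℤ × ℤ} (h : QFEquiv f g) : qfDisc f = qfDisc g := by
  obtain ⟨γ, rfl⟩ := qfEquiv_iff_exists_eq_qfComp.1 h
  simp [qfDisc_qfComp]

lemma isPrimitiveQF_iff_isUnit_of_dvd {f : ℤ × ℤ × ℤ} :
    IsPrimitiveQF f ↔ ∀ d : ℤ, d ∣ f.1 → d ∣ f.2.1 → d ∣ f.2.2 → IsUnit d := by
  constructor
  · intro hf d ha hb hc
    have hd : d ∣ (Int.gcd (Int.gcd f.1 f.2.1) f.2.2 : ℤ) :=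
      Int.dvd_coe_gcd (Int.dvd_coe_gcd ha hb) hc
    rw [hf] at hd
    exact isUnit_of_dvd_one (by exact_mod_cast hd)
  · intro h
    have hab := Int.gcd_dvd_left (Int.gcd f.1 f.2.1) f.2.2
    have hunit := h _ (hab.trans (Int.gcd_dvd_left _ _)) (hab.trans (Int.gcd_dvd_right _ _))
      (Int.gcd_dvd_right _ _)
    exact Nat.isUnit_iff.1 (Int.ofNat_isUnit.1 hunit)

lemma dvd_gcd_mul {d x y k : ℤ} (hx : d ∣ x * k) (hy : d ∣ y * k) : d ∣ Int.gcd x y * k := by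
  rw [Int.gcd_eq_gcd_ab, add_mul, mul_right_comm x, mul_right_comm y]
  exact dvd_add (hx.mul_right _) (hy.mul_right _)

lemma IsPrimitiveQF.dvd_of_dvd_mul {f : ℤ × ℤ × ℤ} (hf : IsPrimitiveQF f) {d k : ℤ}
    (ha : d ∣ f.1 * k) (hb : d ∣ f.2.1 * k) (hc : d ∣ f.2.2 * k) : d ∣ k := by
  have h := dvd_gcd_mul (dvd_gcd_mul ha hb) hc
  rwa [hf, Nat.cast_one, one_mul] at h

lemma dvd_qfComp {d : ℤ} {f : ℤ × ℤ × ℤ} (ha : d ∣ f.1) (hb : d ∣ f.2.1) (hc : d ∣ f.2.2)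
    (M : Matrix (Fin 2) (Fin 2) ℤ) :
    d ∣ (qfComp f M).1 ∧ d ∣ (qfComp f M).2.1 ∧ d ∣ (qfComp f M).2.2 := by
  have dvd_combination (x y z : ℤ) : d ∣ f.1 * x + f.2.1 * y + f.2.2 * z :=
    ((ha.mul_right x).add (hb.mul_right y)).add (hc.mul_right z)
  refine ⟨?_, ?_, ?_⟩
  · convert dvd_combination (M 0 0 ^ 2) (M 0 0 * M 1 0) (M 1 0 ^ 2) using 1
    simp only [qfComp, qfEval]
    ring
  · convert dvd_combination (2 * M 0 0 * M 0 1) (M 0 0 * M 1 1 + M 0 1 * M 1 0)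
      (2 * M 1 0 * M 1 1) using 1
    simp only [qfComp]
    ring
  · convert dvd_combination (M 0 1 ^ 2) (M 0 1 * M 1 1) (M 1 1 ^ 2) using 1
    simp only [qfComp, qfEval]
    ring

lemma QFEquiv.isPrimitiveQF {f g : ℤ × ℤ × ℤ} (h : QFEquiv f g) (hg : IsPrimitiveQF g) :
    IsPrimitiveQF f := by
  obtain ⟨γ, rfl⟩ := qfEquiv_iff_exists_eq_qfComp.1 h.symm
  rw [isPrimitiveQF_iff_isUnit_of_dvd] at hg ⊢
  intro d ha hb hc
  obtain ⟨ha', hb', hc'⟩ := dvd_qfComp ha hb hc γ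
  exact hg d ha' hb' hc'

lemma qfEval_pos {f : ℤ × ℤ × ℤ} (hD : qfDisc f < 0) (ha : 0 < f.1) {x y : ℤ}
    (hxy : x ≠ 0 ∨ y ≠ 0) : 0 < qfEval f x y := by
  have complete_square : 4 * f.1 * qfEval f x y =
      (2 * f.1 * x + f.2.1 * y) ^ 2 + -qfDisc f * y ^ 2 := by
    simp only [qfEval, qfDisc]
    ring
  refine pos_of_mul_pos_right (a := 4 * f.1) ?_ (by positivity)
  rw [complete_square]
  have hD' : 0 < -qfDisc f := by linarith
  rcases eq_or_ne y 0 with rfl | hy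
  · have hx : x ≠ 0 := by simpa using hxy
    simp only [mul_zero, add_zero]
    positivity
  · positivity

lemma QFEquiv.fst_pos {f g : ℤ × ℤ × ℤ} (h : QFEquiv f g) (hD : qfDisc g < 0) (ha : 0 < g.1) :
    0 < f.1 := by
  obtain ⟨γ, rfl⟩ := qfEquiv_iff_exists_eq_qfComp.1 h
  refine qfEval_pos hD ha ?_
  by_contra! hcol
  have hdet := γ.det_coe
  rw [Matrix.det_fin_two, hcol.1, hcol.2] at hdet
  simp at hdet

lemma exists_of_qfComp_eq_self {f : ℤ × ℤ × ℤ} (hf : IsPrimitiveQF f) (ha : f.1 ≠ 0)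
    {γ : SL(2, ℤ)} (h : qfComp f γ = f) :
    ∃ u, γ 1 0 = f.1 * u ∧ γ 1 1 = γ 0 0 + f.2.1 * u ∧ γ 0 1 = -f.2.2 * u := by
  have hdet := γ.det_coe
  rw [Matrix.det_fin_two] at hdet
  obtain ⟨a, b, c⟩ := f
  simp only [qfComp, qfEval, Prod.mk.injEq] at h ha ⊢
  obtain ⟨h₁, h₂, -⟩ := h
  have hb : a * (γ 1 1 - γ 0 0) = b * γ 1 0 := by
    refine mul_left_cancel₀ (two_ne_zero' ℤ) ?_
    linear_combination (-2 * γ 1 1) * h₁ + γ 1 0 * h₂ + (2 * a * γ 0 0 + b * γ 1 0) * hdet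
  have hc : a * γ 0 1 = -c * γ 1 0 := by
    refine mul_left_cancel₀ (two_ne_zero' ℤ) ?_
    linear_combination (-2 * γ 0 1) * h₁ + γ 0 0 * h₂ - (b * γ 0 0 + 2 * c * γ 1 0) * hdet
  obtain ⟨u, hu⟩ : a ∣ γ 1 0 := hf.dvd_of_dvd_mul (dvd_mul_right _ _) ⟨_, hb.symm⟩
    ⟨-γ 0 1, by linear_combination hc⟩
  rw [hu] at hb hc
  refine ⟨u, hu, mul_left_cancel₀ ha ?_, mul_left_cancel₀ ha ?_⟩
  · linear_combination hb
  · linear_combination hc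

theorem eq_one_or_neg_one_of_qfComp_eq_self {f : ℤ × ℤ × ℤ} (hD : qfDisc f < -4)
    (hf : IsPrimitiveQF f) {γ : SL(2, ℤ)} (h : qfComp f γ = f) : γ = 1 ∨ γ = -1 := by
  have ha : f.1 ≠ 0 := by
    intro ha
    rw [qfDisc, ha] at hD
    nlinarith
  obtain ⟨u, h₁₀, h₁₁, h₀₁⟩ := exists_of_qfComp_eq_self hf ha h
  have hdet := γ.det_coe
  rw [Matrix.det_fin_two, h₁₀, h₁₁, h₀₁] at hdet
  have pell : (2 * γ 0 0 + f.2.1 * u) ^ 2 - qfDisc f * u ^ 2 = 4 := by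
    rw [qfDisc]
    linear_combination 4 * hdet
  obtain rfl : u = 0 := by
    by_contra hu
    have : 0 < u ^ 2 := by positivity
    nlinarith [sq_nonneg (2 * γ 0 0 + f.2.1 * u)]
  have h₀₀ : γ 0 0 = 1 ∨ γ 0 0 = -1 :=
    Int.eq_one_or_neg_one_of_mul_eq_one (v := γ 0 0) (by linear_combination hdet)
  refine h₀₀.imp (fun h ↦ ?_) (fun h ↦ ?_) <;> ext i j <;> fin_cases i <;> fin_cases j <;>
    simp [*]

lemma eq_or_eq_neg_of_qfComp_eq {f : ℤ × ℤ × ℤ} (hD : qfDisc f < -4) (hf : IsPrimitiveQF f)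
    {γ δ : SL(2, ℤ)} (h : qfComp f γ = qfComp f δ) : γ = δ ∨ γ = -δ := by
  have hfix : qfComp f ↑(γ * δ⁻¹) = f := by
    rw [Matrix.SpecialLinearGroup.coe_mul, qfComp_mul, h, qfComp_qfComp_inv]
  refine (eq_one_or_neg_one_of_qfComp_eq_self hD hf hfix).imp (fun h ↦ ?_) (fun h ↦ ?_)
  · exact mul_inv_eq_one.1 h
  · rw [mul_inv_eq_iff_eq_mul.1 h, neg_one_mul]

/-- The form `f(x, n y)`, whose discriminant is `n²` times that of `f`. -/
def qfScale (n : ℤ) (f : ℤ × ℤ × ℤ) : ℤ × ℤ × ℤ := (f.1, n * f.2.1, n ^ 2 * f.2.2)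

lemma qfDisc_qfScale (n : ℤ) (f : ℤ × ℤ × ℤ) : qfDisc (qfScale n f) = qfDisc f * n ^ 2 := by
  simp only [qfDisc, qfScale]
  ring

lemma qfScale_injective {n : ℤ} (hn : n ≠ 0) : Function.Injective (qfScale n) := by
  rintro ⟨a, b, c⟩ ⟨a', b', c'⟩ h
  simpa [qfScale, hn] using h

lemma isPrimitiveQF_qfScale {n : ℤ} {f : ℤ × ℤ × ℤ} :
    IsPrimitiveQF (qfScale n f) ↔ IsPrimitiveQF f ∧ IsCoprime f.1 n := by
  simp only [isPrimitiveQF_iff_isUnit_of_dvd, qfScale]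
  constructor
  · refine fun h ↦ ⟨fun d ha hb hc ↦ h d ha (hb.mul_left _) (hc.mul_left _), ?_⟩
    rw [← gcd_isUnit_iff]
    have hn := gcd_dvd_right f.1 n
    exact h _ (gcd_dvd_left f.1 n) (hn.mul_right _) ((hn.pow two_ne_zero).mul_right _)
  · rintro ⟨h, hcop⟩ d ha hb hc
    have hdn : IsCoprime d n := hcop.of_isCoprime_of_dvd_left ha
    exact h d ha (hdn.dvd_of_dvd_mul_left hb) (hdn.pow_right.dvd_of_dvd_mul_left hc)

lemma qfScale_qfComp (n : ℤ) (f : ℤ × ℤ × ℤ) (α β γ δ : ℤ) :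
    qfScale n (qfComp f !![α, β; n * γ, δ]) = qfComp (qfScale n f) !![α, n * β; γ, δ] := by
  simp only [qfScale, qfComp, qfEval, Matrix.of_apply, Matrix.cons_val', Matrix.cons_val_zero,
    Matrix.cons_val_one, Matrix.cons_val_fin_one, Prod.mk.injEq]
  refine ⟨?_, ?_, ?_⟩ <;> ring

lemma dvd_of_qfScale_eq_qfComp_qfScale {p : ℤ} (hp : Prime p) {f g : ℤ × ℤ × ℤ}
    (hg : IsCoprime g.1 p) {M : Matrix (Fin 2) (Fin 2) ℤ}
    (h : qfScale p f = qfComp (qfScale p g) M) : p ∣ M 0 1 := by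
  have hc : p ^ 2 * f.2.2 = g.1 * M 0 1 ^ 2 + p * g.2.1 * M 0 1 * M 1 1 +
      p ^ 2 * g.2.2 * M 1 1 ^ 2 := congrArg (fun k ↦ k.2.2) h
  have hdvd : p ∣ g.1 * M 0 1 ^ 2 :=
    ⟨p * f.2.2 - g.2.1 * M 0 1 * M 1 1 - p * g.2.2 * M 1 1 ^ 2, by linear_combination -hc⟩
  exact hp.dvd_of_dvd_pow (hg.symm.dvd_of_dvd_mul_left hdvd)

lemma qfEquiv_qfScale_qfComp {n : ℕ} {γ : SL(2, ℤ)} (hγ : γ ∈ Gamma0 n) (f : ℤ × ℤ × ℤ) :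
    QFEquiv (qfScale n (qfComp f γ)) (qfScale n f) := by
  obtain ⟨t, ht⟩ := (ZMod.intCast_zmod_eq_zero_iff_dvd _ _).1 (Gamma0_mem.1 hγ)
  have hdet := γ.det_coe
  rw [Matrix.eta_fin_two γ.1, ht] at hdet ⊢
  refine qfEquiv_iff_exists_eq_qfComp.2 ⟨⟨!![γ 0 0, n * γ 0 1; t, γ 1 1], ?_⟩,
    qfScale_qfComp _ _ _ _ _ _⟩
  rw [Matrix.det_fin_two_of] at hdet ⊢
  linear_combination hdet

theorem exists_mem_Gamma0_of_qfEquiv_qfScale {p : ℕ} (hp : p.Prime) {f g : ℤ × ℤ × ℤ}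
    (hg : IsCoprime g.1 p) (h : QFEquiv (qfScale p f) (qfScale p g)) :
    ∃ γ ∈ Gamma0 p, f = qfComp g γ := by
  obtain ⟨γ, h⟩ := qfEquiv_iff_exists_eq_qfComp.1 h
  obtain ⟨t, ht⟩ := dvd_of_qfScale_eq_qfComp_qfScale (Nat.prime_iff_prime_int.1 hp) hg h
  have hdet := γ.det_coe
  rw [Matrix.eta_fin_two γ.1, ht] at h hdet
  refine ⟨⟨!![γ 0 0, t; p * γ 1 0, γ 1 1], ?_⟩, Gamma0_mem.2 (by simp), ?_⟩
  · rw [Matrix.det_fin_two_of] at hdet ⊢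
    linear_combination hdet
  · exact qfScale_injective (mod_cast hp.ne_zero) (h.trans (qfScale_qfComp _ _ _ _ _ _).symm)

lemma mk_Gamma0_eq_mk_iff {N : ℕ} {γ δ : SL(2, ℤ)} :
    (γ : SL(2, ℤ) ⧸ Gamma0 N) = δ ↔ (γ 0 0 * δ 1 0 : ZMod N) = γ 1 0 * δ 0 0 := by
  rw [QuotientGroup.eq, Gamma0_mem]
  simp [Matrix.SpecialLinearGroup.coe_inv, Matrix.adjugate_fin_two, Matrix.mul_apply,
    neg_add_eq_sub, sub_eq_zero]

/-- The points of the projective line over `ZMod p`, with `none = (1 : 0)` and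
`some j = (j : 1)`, lifted to matrices in `SL(2, ℤ)` with that first column: a transversal of the
left cosets of `Γ₀(p)` when `p` is prime. -/
def cosetRep (p : ℕ) : Option (ZMod p) → SL(2, ℤ)
  | none => 1
  | some j => ⟨!![j.cast, -1; 1, 0], by simp⟩

lemma mk_cosetRep_injective (p : ℕ) [Fact p.Prime] :
    Function.Injective fun l ↦ (cosetRep p l : SL(2, ℤ) ⧸ Gamma0 p) := by
  intro l l' h
  have h := mk_Gamma0_eq_mk_iff.1 h
  rcases l with _ | j <;> rcases l' with _ | j' <;> simp_all [cosetRep]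

lemma mk_cosetRep_surjective (p : ℕ) [Fact p.Prime] :
    Function.Surjective fun l ↦ (cosetRep p l : SL(2, ℤ) ⧸ Gamma0 p) := by
  intro q
  induction q using QuotientGroup.induction_on with | _ γ
  by_cases h : (γ 1 0 : ZMod p) = 0
  · exact ⟨none, mk_Gamma0_eq_mk_iff.2 (by simp [cosetRep, h])⟩
  · refine ⟨some ((γ 0 0 : ZMod p) / γ 1 0), mk_Gamma0_eq_mk_iff.2 ?_⟩
    simp [cosetRep, h]

/-- The values of `a X² + b X Y + c Y²` at the points of the projective line, normalised as
`none = (1 : 0)` and `some x = (x : 1)`; only their vanishing is independent of this choice. -/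
def projValue {R : Type*} [CommRing R] (a b c : R) : Option R → R
  | none => a
  | some x => a * (x * x) + b * x + c

section FiniteField

variable {F : Type*} [Field F] [Fintype F] [DecidableEq F]

open Finset

lemma card_quadratic_roots (hF : ringChar F ≠ 2) {a : F} (ha : a ≠ 0) (b c : F) :
    (#{x | a * (x * x) + b * x + c = 0} : ℤ) = quadraticChar F (discrim a b c) + 1 := by
  have h2 : (2 : F) ≠ 0 := Ring.two_ne_zero hF
  have : NeZero (2 : F) := ⟨h2⟩
  rw [← quadraticChar_card_sqrts hF, Nat.cast_inj]
  let completeSquare : F ≃ F :=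
    (Equiv.mulLeft₀ (2 * a) (mul_ne_zero h2 ha)).trans (Equiv.addRight b)
  refine card_equiv completeSquare fun x ↦ ?_
  simp [completeSquare, quadratic_eq_zero_iff_discrim_eq_sq ha, eq_comm]

lemma card_linear_roots {b : F} (hb : b ≠ 0) (c : F) : #{x | b * x + c = 0} = 1 := by
  rw [card_eq_one]
  refine ⟨-c / b, ?_⟩
  ext x
  simp [eq_div_iff hb, mul_comm x, eq_neg_iff_add_eq_zero]

lemma card_projValue_eq_zero (hF : ringChar F ≠ 2) {a b c : F} (h : ¬(a = 0 ∧ b = 0 ∧ c = 0)) :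
    (#{l | projValue a b c l = 0} : ℤ) = quadraticChar F (discrim a b c) + 1 := by
  have split : #{l | projValue a b c l = 0} =
      (if a = 0 then 1 else 0) + #{x | a * (x * x) + b * x + c = 0} := by
    rw [card_filter, Fintype.sum_option, card_filter]
    rfl
  rw [split]
  by_cases ha : a = 0
  · subst ha
    by_cases hb : b = 0
    · subst hb
      simp_all [discrim]
    · simp [discrim, card_linear_roots hb, quadraticChar_sq_one' hb]
  · simp [ha, card_quadratic_roots hF ha]

theorem card_projValue_ne_zero (hF : ringChar F ≠ 2) {a b c : F}
    (h : ¬(a = 0 ∧ b = 0 ∧ c = 0)) :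
    (#{l | projValue a b c l ≠ 0} : ℤ) = Fintype.card F - quadraticChar F (discrim a b c) := by
  have total := card_filter_add_card_filter_not (s := univ) fun l ↦ projValue a b c l = 0
  rw [card_univ, Fintype.card_option] at total
  have zeros := card_projValue_eq_zero hF h
  grind

end FiniteField

/-- The points of the projective line over `ZMod p` at which `f` does not vanish. -/
abbrev NonvanishingPoint (p : ℕ) (f : ℤ × ℤ × ℤ) : Type :=
  {l : Option (ZMod p) // IsCoprime (qfComp f (cosetRep p l)).1 p}

lemma isCoprime_fst_qfComp_cosetRep_iff {p : ℕ} [Fact p.Prime] {f : ℤ × ℤ × ℤ}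
    {l : Option (ZMod p)} : IsCoprime (qfComp f (cosetRep p l)).1 p ↔
      projValue (f.1 : ZMod p) f.2.1 f.2.2 l ≠ 0 := by
  rw [isCoprime_comm, ← ZMod.coe_int_isUnit_iff_isCoprime, isUnit_iff_ne_zero]
  cases l <;> simp [qfComp, qfEval, cosetRep, projValue, sq]

lemma IsPrimitiveQF.not_forall_cast_eq_zero {p : ℕ} [Fact p.Prime] {f : ℤ × ℤ × ℤ}
    (hf : IsPrimitiveQF f) :
    ¬((f.1 : ZMod p) = 0 ∧ (f.2.1 : ZMod p) = 0 ∧ (f.2.2 : ZMod p) = 0) := by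
  simp only [ZMod.intCast_zmod_eq_zero_iff_dvd]
  rintro ⟨ha, hb, hc⟩
  have hp := Nat.prime_iff_prime_int.1 (Fact.out : p.Prime)
  exact hp.not_isUnit (isPrimitiveQF_iff_isUnit_of_dvd.1 hf p ha hb hc)

theorem card_nonvanishingPoint {p : ℕ} [Fact p.Prime] (hp2 : p ≠ 2) {f : ℤ × ℤ × ℤ}
    (hf : IsPrimitiveQF f) :
    (Nat.card (NonvanishingPoint p f) : ℤ) = p - jacobiSym (qfDisc f) p := by
  have hdisc : discrim (f.1 : ZMod p) f.2.1 f.2.2 = (qfDisc f : ℤ) := by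
    simp [discrim, qfDisc]
  have hchar : ringChar (ZMod p) ≠ 2 := by rwa [ZMod.ringChar_zmod_n]
  have hcard := card_projValue_ne_zero hchar (hf.not_forall_cast_eq_zero (p := p))
  rw [hdisc, ZMod.card] at hcard
  rw [← jacobiSym.legendreSym.to_jacobiSym, legendreSym, ← hcard, Nat.card_eq_fintype_card,
    Fintype.card_subtype]
  simp only [isCoprime_fst_qfComp_cosetRep_iff]

lemma nonempty_nonvanishingPoint (p : ℕ) [Fact p.Prime] {f : ℤ × ℤ × ℤ} (hf : IsPrimitiveQF f) :
    Nonempty (NonvanishingPoint p f) := by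
  by_contra hempty
  have hzero (l : Option (ZMod p)) : projValue (f.1 : ZMod p) f.2.1 f.2.2 l = 0 := by
    by_contra hl
    exact hempty ⟨l, isCoprime_fst_qfComp_cosetRep_iff.2 hl⟩
  have ha : (f.1 : ZMod p) = 0 := hzero none
  have hc : (f.2.2 : ZMod p) = 0 := by simpa [projValue] using hzero (some 0)
  have hb : (f.2.1 : ZMod p) = 0 := by simpa [projValue, ha, hc] using hzero (some 1)
  exact hf.not_forall_cast_eq_zero ⟨ha, hb, hc⟩

lemma qfComp_T_zpow (f : ℤ × ℤ × ℤ) (k : ℤ) :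
    qfComp f ↑(ModularGroup.T ^ k) = (f.1, f.2.1 + 2 * f.1 * k, qfEval f k 1) := by
  simp [qfComp, qfEval, ModularGroup.coe_T_zpow, add_comm]

lemma exists_qfEquiv_dvd_snd {n : ℤ} {f : ℤ × ℤ × ℤ} (h : IsCoprime (2 * f.1) n) :
    ∃ g, QFEquiv g f ∧ g.1 = f.1 ∧ n ∣ g.2.1 := by
  obtain ⟨s, t, hst⟩ := h
  refine ⟨_, qfEquiv_qfComp f (ModularGroup.T ^ (-f.2.1 * s)), ?_⟩
  rw [qfComp_T_zpow]
  exact ⟨rfl, f.2.1 * t, by linear_combination -f.2.1 * hst⟩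

lemma exists_qfScale_eq {n : ℤ} {f : ℤ × ℤ × ℤ} (ha : IsCoprime (2 * f.1) n) (hb : n ∣ f.2.1)
    (hD : n ^ 2 ∣ qfDisc f) : ∃ g, qfScale n g = f := by
  have h4ac : n ^ 2 ∣ 2 * (2 * f.1) * f.2.2 := by
    have h4ac_eq : 2 * (2 * f.1) * f.2.2 = f.2.1 ^ 2 - qfDisc f := by
      rw [qfDisc]
      ring
    rw [h4ac_eq]
    exact (pow_dvd_pow_of_dvd hb 2).sub hD
  have hcop : IsCoprime (2 * (2 * f.1)) n := ha.of_mul_left_left.mul_left ha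
  obtain ⟨c, hc⟩ := hcop.symm.pow_left.dvd_of_dvd_mul_left h4ac
  obtain ⟨b, hb⟩ := hb
  exact ⟨(f.1, b, c), Prod.ext rfl (Prod.ext hb.symm hc.symm)⟩

theorem exists_qfEquiv_qfScale {p : ℕ} [Fact p.Prime] (hp2 : p ≠ 2) {f : ℤ × ℤ × ℤ}
    (hf : IsPrimitiveQF f) (hD : (p : ℤ) ^ 2 ∣ qfDisc f) : ∃ g, QFEquiv (qfScale p g) f := by
  obtain ⟨l, hl⟩ := nonempty_nonvanishingPoint p hf
  have h2 : IsCoprime (2 : ℤ) p :=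
    Nat.isCoprime_iff_coprime.2 ((Nat.coprime_primes Nat.prime_two Fact.out).2 hp2.symm)
  obtain ⟨g, hg, hga, hgb⟩ := exists_qfEquiv_dvd_snd (h2.mul_left hl)
  have hgf := hg.trans (qfEquiv_qfComp f (cosetRep p l))
  obtain ⟨k, rfl⟩ := exists_qfScale_eq (hga ▸ h2.mul_left hl) hgb (hgf.qfDisc_eq ▸ hD)
  exact ⟨k, hgf⟩

/-- The primitive forms of discriminant `D` with positive leading coefficient, i.e. the forms
whose classes `classNumber D` counts. -/
abbrev PosPrimForm (D : ℤ) : Type :=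
  {f : ℤ × ℤ × ℤ // qfDisc f = D ∧ IsPrimitiveQF f ∧ 0 < f.1}

/-- Equivalence of forms, as a setoid, so that the `Quotient` interface applies to `classNumber`. -/
instance posPrimFormSetoid (D : ℤ) : Setoid (PosPrimForm D) where
  r f g := QFEquiv f.1 g.1
  iseqv := qfEquiv_equivalence.comap Subtype.val

/-- The set of equivalence classes of forms whose cardinality is `classNumber D`. -/
abbrev FormClass (D : ℤ) : Type := Quotient (posPrimFormSetoid D)

lemma classNumber_eq_card_formClass (D : ℤ) : classNumber D = Nat.card (FormClass D) := rfl

lemma mem_posPrimForm_of_qfEquiv {D : ℤ} (hD : D < 0) {g : ℤ × ℤ × ℤ} {f : PosPrimForm D}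
    (h : QFEquiv g f.1) : qfDisc g = D ∧ IsPrimitiveQF g ∧ 0 < g.1 := by
  obtain ⟨f, rfl, hf, ha⟩ := f
  exact ⟨h.qfDisc_eq, h.isPrimitiveQF hf, h.fst_pos hD ha⟩

lemma mem_posPrimForm_qfScale_iff {D n : ℤ} (hn : n ≠ 0) {f : ℤ × ℤ × ℤ} :
    (qfDisc (qfScale n f) = D * n ^ 2 ∧ IsPrimitiveQF (qfScale n f) ∧ 0 < (qfScale n f).1) ↔
      (qfDisc f = D ∧ IsPrimitiveQF f ∧ 0 < f.1) ∧ IsCoprime f.1 n := by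
  rw [qfDisc_qfScale, mul_left_inj' (pow_ne_zero 2 hn), isPrimitiveQF_qfScale]
  change _ ∧ _ ∧ 0 < f.1 ↔ _
  tauto

section LiftClass

variable {p : ℕ} [Fact p.Prime] {D : ℤ}

/-- The class of `f(ρ (x, p y)ᵀ)`, where `f` is a representative of the given class and `ρ` the
matrix attached to a point of the projective line over `ZMod p` at which `f` does not vanish. -/
noncomputable def liftClass (hD : D < 0) (x : Σ C : FormClass D, NonvanishingPoint p C.out.1) :
    FormClass (D * p ^ 2) :=
  ⟦⟨qfScale p (qfComp x.1.out.1 (cosetRep p x.2.1)),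
    (mem_posPrimForm_qfScale_iff (mod_cast (Fact.out : p.Prime).ne_zero)).2
      ⟨mem_posPrimForm_of_qfEquiv hD (qfEquiv_qfComp _ _), x.2.2⟩⟩⟧

lemma liftClass_injective (hD : D < -4) :
    Function.Injective (liftClass (p := p) (hD.trans (by simp))) := by
  rintro ⟨C, l, hl⟩ ⟨C', l', hl'⟩ h
  obtain ⟨δ, hδ, hforms⟩ :=
    exists_mem_Gamma0_of_qfEquiv_qfScale Fact.out hl' (Quotient.exact h)
  obtain rfl : C = C' := by
    rw [← C.out_eq, ← C'.out_eq]
    refine Quotient.sound ((qfEquiv_qfComp _ (cosetRep p l)).symm.trans ?_)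
    rw [hforms]
    exact (qfEquiv_qfComp _ _).trans (qfEquiv_qfComp _ _)
  rw [← qfComp_mul, ← Matrix.SpecialLinearGroup.coe_mul] at hforms
  have hcoset : (cosetRep p l' : SL(2, ℤ) ⧸ Gamma0 p) = cosetRep p l := by
    rcases eq_or_eq_neg_of_qfComp_eq (C.out.2.1.trans_lt hD) C.out.2.2.1 hforms with h | h
    · simpa [h, QuotientGroup.eq] using hδ
    · simpa [h, QuotientGroup.eq, Gamma0_mem] using hδ
  obtain rfl := mk_cosetRep_injective p hcoset
  rfl

lemma liftClass_surjective (hp2 : p ≠ 2) (hD : D < 0) :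
    Function.Surjective (liftClass (p := p) hD) := by
  have hp0 : (p : ℤ) ≠ 0 := mod_cast (Fact.out : p.Prime).ne_zero
  have hDp : D * p ^ 2 < 0 := mul_neg_of_neg_of_pos hD (by positivity)
  intro C
  induction C using Quotient.inductionOn with | _ F
  obtain ⟨f, hfF⟩ := exists_qfEquiv_qfScale hp2 F.2.2.1 (by rw [F.2.1]; exact dvd_mul_left _ _)
  obtain ⟨hf, -⟩ := (mem_posPrimForm_qfScale_iff hp0).1 (mem_posPrimForm_of_qfEquiv hDp hfF)
  obtain ⟨γ, hγ⟩ := qfEquiv_iff_exists_eq_qfComp.1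
    (Quotient.exact (Quotient.out_eq (⟦⟨f, hf⟩⟧ : FormClass D)).symm)
  set g := (⟦⟨f, hf⟩⟧ : FormClass D).out
  obtain ⟨l, hl⟩ := mk_cosetRep_surjective p γ
  have hlift : QFEquiv (qfScale p (qfComp g.1 (cosetRep p l))) F.1 := by
    have hmem : (cosetRep p l)⁻¹ * γ ∈ Gamma0 p := QuotientGroup.eq.1 hl
    have hfg : f = qfComp (qfComp g.1 (cosetRep p l)) ↑((cosetRep p l)⁻¹ * γ) := by
      rw [← qfComp_mul, ← Matrix.SpecialLinearGroup.coe_mul, mul_inv_cancel_left]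
      exact hγ
    rw [hfg] at hfF
    exact (qfEquiv_qfScale_qfComp hmem _).symm.trans hfF
  have hcop := ((mem_posPrimForm_qfScale_iff hp0).1 (mem_posPrimForm_of_qfEquiv hDp hlift)).2
  exact ⟨⟨_, l, hcop⟩, Quotient.sound hlift⟩

end LiftClass

lemma card_sigma_of_card_eq {ι : Type*} {T : ι → Type*} [∀ i, Finite (T i)] {n : ℤ}
    (h : ∀ i, (Nat.card (T i) : ℤ) = n) : (Nat.card (Σ i, T i) : ℤ) = Nat.card ι * n := by
  rcases isEmpty_or_nonempty ι with hι | ⟨⟨i₀⟩⟩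
  · simp
  · have equivFin (i : ι) : T i ≃ Fin (Nat.card (T i₀)) :=
      Finite.equivFinOfCardEq (by exact_mod_cast (h i).trans (h i₀).symm)
    rw [Nat.card_congr ((Equiv.sigmaCongrRight equivFin).trans (Equiv.sigmaEquivProd _ _)),
      Nat.card_prod, Nat.card_fin, Nat.cast_mul, h i₀]

theorem classNumber_mul_prime_sq {p : ℕ} [Fact p.Prime] (hp2 : p ≠ 2) {D : ℤ} (hD : D < -4) :
    (classNumber (D * p ^ 2) : ℤ) = classNumber D * (p - jacobiSym D p) := by
  have hD0 : D < 0 := hD.trans (by simp)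
  have hbij : Function.Bijective (liftClass (p := p) hD0) :=
    ⟨liftClass_injective hD, liftClass_surjective hp2 hD0⟩
  have hfibre (C : FormClass D) :
      (Nat.card (NonvanishingPoint p C.out.1) : ℤ) = p - jacobiSym D p := by
    rw [card_nonvanishingPoint hp2 C.out.2.2.1, C.out.2.1]
  simp only [classNumber_eq_card_formClass]
  rw [← Nat.card_congr (Equiv.ofBijective _ hbij), card_sigma_of_card_eq hfibre]

lemma phiD_mul_prod_primeFactors (D : ℤ) {r : ℕ} (hr : r ≠ 0) :
    phiD D r * ∏ p ∈ r.primeFactors, (p : ℤ) =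
      r * ∏ p ∈ r.primeFactors, ((p : ℤ) - jacobiSym D p) := by
  have hr_eq : ∏ p ∈ r.primeFactors, (p : ℤ) ^ (r.factorization p - 1) * p = r := by
    have hfactor (p : ℕ) (hp : p ∈ r.primeFactors) :
        (p : ℤ) ^ (r.factorization p - 1) * p = p ^ r.factorization p :=
      pow_sub_one_mul (Finsupp.mem_support_iff.1 hp) _
    rw [Finset.prod_congr rfl hfactor]
    exact_mod_cast Nat.prod_factorization_pow_eq_self hr
  rw [phiD, ← Finset.prod_mul_distrib, ← hr_eq, ← Finset.prod_mul_distrib]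
  exact Finset.prod_congr rfl fun p _ ↦ mul_right_comm _ _ _

lemma phiD_prime_mul (D : ℤ) {p m : ℕ} [Fact p.Prime] (hm : m ≠ 0) :
    phiD D (p * m) = phiD D m * (p - jacobiSym (D * m ^ 2) p) := by
  have hp : p.Prime := Fact.out
  have hrad : ∏ q ∈ (p * m).primeFactors, (q : ℤ) ≠ 0 :=
    Finset.prod_ne_zero_iff.2 fun q hq ↦ mod_cast (Nat.prime_of_mem_primeFactors hq).ne_zero
  have hphi := phiD_mul_prod_primeFactors D hm
  refine mul_right_cancel₀ hrad ?_
  rw [phiD_mul_prod_primeFactors D (mul_ne_zero hp.ne_zero hm),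
    Nat.primeFactors_mul hp.ne_zero hm, hp.primeFactors, Finset.singleton_union, Nat.cast_mul]
  by_cases hpm : p ∣ m
  · have hJ : jacobiSym (D * m ^ 2) p = 0 := by
      rw [← jacobiSym.legendreSym.to_jacobiSym, legendreSym.eq_zero_iff]
      simp [(ZMod.natCast_eq_zero_iff m p).2 hpm]
    rw [Finset.insert_eq_self.2 (Nat.mem_primeFactors.2 ⟨hp, hpm, hm⟩), hJ]
    linear_combination -p * hphi
  · have hJ : jacobiSym (D * m ^ 2) p = jacobiSym D p := by
      have hcop : Int.gcd m p = 1 := ((hp.coprime_iff_not_dvd).2 hpm).symm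
      rw [jacobiSym.mul_left, jacobiSym.sq_one' hcop, mul_one]
    have hmem : p ∉ m.primeFactors := fun h ↦ hpm (Nat.dvd_of_mem_primeFactors h)
    rw [Finset.prod_insert hmem, Finset.prod_insert hmem, hJ]
    linear_combination -p * (p - jacobiSym D p) * hphi

theorem stmt6 (D : ℤ) (hD4 : D < -4) (hDmod : D % 4 = 0 ∨ D % 4 = 1)
    (r : ℕ) (hr : 1 < r) (hodd : Odd r) :
    (classNumber (D * (r : ℤ) ^ 2) : ℤ) = (classNumber D : ℤ) * phiD D r := by
  clear hDmod hr
  induction r using induction_on_primes with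
  | zero => simp at hodd
  | one => simp [phiD]
  | prime_mul p m hp ih =>
    obtain ⟨hp_odd, hm_odd⟩ := Nat.odd_mul.1 hodd
    have hp2 : p ≠ 2 := fun h ↦ Nat.not_odd_iff_even.2 even_two (h ▸ hp_odd)
    have hm : 0 < m := hm_odd.pos
    have hm_sq : 1 ≤ (m : ℤ) ^ 2 := one_le_pow₀ (mod_cast hm)
    have hDm : D * (m : ℤ) ^ 2 < -4 := by nlinarith
    have : Fact p.Prime := ⟨hp⟩
    calc (classNumber (D * ((p * m : ℕ) : ℤ) ^ 2) : ℤ)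
        = classNumber (D * (m : ℤ) ^ 2 * (p : ℤ) ^ 2) := by push_cast; ring_nf
      _ = classNumber (D * (m : ℤ) ^ 2) * (p - jacobiSym (D * (m : ℤ) ^ 2) p) :=
        classNumber_mul_prime_sq hp2 hDm
      _ = classNumber D * phiD D (p * m) := by rw [ih hm_odd, mul_assoc, phiD_prime_mul D hm.ne']
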